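/- For every real a with 0 ≤ a ≤ 1, ∫_{−a}^{a} ln(1 + x)/√(a^2 − x^2) dx = π ln((1 + √(1 − a^2))/2). -/

import Mathlib

open Real

lemma aux_norm (r t : ℝ) : Real.log ‖circleMap 0 1 t - (-(r : ℂ))‖
    = Real.log (1 + 2 * r * Real.cos t + r ^ 2) / 2 := by
  rw [← Real.log_sqrt (by nlinarith [Real.sin_sq_add_cos_sq t, sq_nonneg (r + Real.cos t), sq_nonneg (Real.sin t)])]
  congr 1
  rw [Complex.norm_def, Complex.normSq_apply]
  congr 1
  simp [circleMap, Complex.exp_ofReal_mul_I_re, Complex.exp_ofReal_mul_I_im]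
  nlinarith [Real.sin_sq_add_cos_sq t]

lemma aux_int (r : ℝ) (h0 : 0 ≤ r) (h1 : r ≤ 1) :
    IntervalIntegrable (fun t => Real.log (1 + 2 * r * Real.cos t + r ^ 2)) MeasureTheory.volume 0 π ∧
    ∫ t in (0:ℝ)..π, Real.log (1 + 2 * r * Real.cos t + r ^ 2) = 0 := by
  have hA := circleAverage_log_norm_sub_const_eq_posLog (a := -(r:ℂ))
  have hI : CircleIntegrable (fun z => Real.log ‖z - (-(r:ℂ))‖) 0 1 := by
    apply circleIntegrable_log_norm_meromorphicOn
    intro z _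
    fun_prop
  unfold CircleIntegrable at hI
  simp only [aux_norm] at hI
  have hI2 : IntervalIntegrable (fun t => Real.log (1 + 2 * r * Real.cos t + r ^ 2)) MeasureTheory.volume 0 (2 * π) := by
    have := hI.const_mul 2
    refine this.congr ?_
    intro t _
    simp only
    ring
  rw [Real.circleAverage_def] at hA
  simp only [aux_norm] at hA
  rw [(Real.posLog_eq_zero_iff _).2 (by simpa [abs_of_nonneg h0] using h1)] at hA
  have hp := Real.pi_pos
  have hA2 : ∫ t in (0:ℝ)..(2*π), Real.log (1 + 2 * r * Real.cos t + r ^ 2) = 0 := by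
    rw [intervalIntegral.integral_div] at hA
    simpa [hp.ne'] using hA
  have i1 := hI2.mono_set (c := 0) (d := π) (Set.uIcc_subset_uIcc (by simp) (by
    rw [Set.uIcc_of_le (by linarith)]; constructor <;> linarith))
  have i2 := hI2.mono_set (c := π) (d := 2 * π) (Set.uIcc_subset_uIcc (by
    rw [Set.uIcc_of_le (by linarith)]; constructor <;> linarith) (by simp))
  refine ⟨i1, ?_⟩
  rw [← intervalIntegral.integral_add_adjacent_intervals i1 i2] at hA2
  have hs := intervalIntegral.integral_comp_sub_left (a := 0) (b := π)
    (fun t => Real.log (1 + 2 * r * Real.cos t + r ^ 2)) (2 * π)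
  simp only [Real.cos_two_pi_sub] at hs
  rw [show 2 * π - π = π by ring, sub_zero] at hs
  linarith

lemma aux_subst (a : ℝ) (h0 : 0 < a) :
    ∫ x in (-a)..a, Real.log (1 + x) / Real.sqrt (a^2 - x^2)
      = ∫ t in (0:ℝ)..π, Real.log (1 + a * Real.cos t) := by
  have hp := Real.pi_pos
  rw [intervalIntegral.integral_of_le (by linarith), intervalIntegral.integral_of_le hp.le,
    MeasureTheory.integral_Ioc_eq_integral_Ioo, MeasureTheory.integral_Ioc_eq_integral_Ioo]
  have him : (fun t => a * Real.cos t) '' Set.Ioo 0 π = Set.Ioo (-a) a := by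
    ext x
    constructor
    · rintro ⟨t, ⟨ht0, ht1⟩, rfl⟩
      have c1 : Real.cos t < 1 := by
        simpa using Real.cos_lt_cos_of_nonneg_of_le_pi le_rfl ht1.le ht0
      have c2 : -1 < Real.cos t := by
        simpa using Real.cos_lt_cos_of_nonneg_of_le_pi ht0.le le_rfl ht1
      constructor <;> simp only <;> nlinarith
    · rintro ⟨hx0, hx1⟩
      have d1 : -1 < x / a := by rw [lt_div_iff₀ h0]; linarith
      have d2 : x / a < 1 := by rw [div_lt_iff₀ h0]; linarith
      refine ⟨Real.arccos (x / a), ⟨Real.arccos_pos.2 d2, ?_⟩, ?_⟩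
      · refine lt_of_le_of_ne (Real.arccos_le_pi _) ?_
        rw [Ne, Real.arccos_eq_pi]; linarith
      · simp only
        rw [Real.cos_arccos d1.le d2.le]; field_simp
  rw [← him, MeasureTheory.integral_image_eq_integral_abs_deriv_smul (f' := fun t => a * (-Real.sin t))
    measurableSet_Ioo (fun t _ => ((Real.hasDerivAt_cos t).const_mul a).hasDerivWithinAt)]
  · refine MeasureTheory.setIntegral_congr_fun measurableSet_Ioo ?_
    rintro t ⟨ht0, ht1⟩
    have hs := Real.sin_pos_of_pos_of_lt_pi ht0 ht1
    have e : a ^ 2 - (a * Real.cos t) ^ 2 = (a * Real.sin t) ^ 2 := by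
      rw [mul_pow, mul_pow, Real.sin_sq]; ring
    have e2 : |a * (-Real.sin t)| = a * Real.sin t := by
      rw [mul_neg, abs_neg, abs_of_pos (by positivity)]
    simp only [smul_eq_mul]
    rw [e, Real.sqrt_sq (by positivity), e2]
    field_simp
  · intro x hx y hy hxy
    exact Real.injOn_cos ⟨hx.1.le, hx.2.le⟩ ⟨hy.1.le, hy.2.le⟩ (mul_left_cancel₀ h0.ne' hxy)

theorem stmt13 (a : ℝ) (h0 : 0 ≤ a) (h1 : a ≤ 1) :
    ∫ x in (-a)..a, Real.log (1 + x) / Real.sqrt (a^2 - x^2)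
      = π * Real.log ((1 + Real.sqrt (1 - a^2)) / 2) := by
  rcases h0.eq_or_lt with rfl | hpos
  · simp
  rw [aux_subst a hpos]
  have hp := Real.pi_pos
  set s := Real.sqrt (1 - a^2) with hs
  have hs0 : 0 ≤ s := Real.sqrt_nonneg _
  have hs2 : s ^ 2 = 1 - a ^ 2 := Real.sq_sqrt (by nlinarith)
  have hr1 : a / (1 + s) ≤ 1 := by rw [div_le_one (by linarith)]; linarith
  obtain ⟨i, hI⟩ := aux_int (a / (1 + s)) (by positivity) hr1
  have key : ∫ t in (0:ℝ)..π, Real.log (1 + a * Real.cos t)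
      = ∫ t in (0:ℝ)..π, (Real.log ((1 + s) / 2) +
        Real.log (1 + 2 * (a / (1 + s)) * Real.cos t + (a / (1 + s)) ^ 2)) := by
    rw [intervalIntegral.integral_of_le hp.le, intervalIntegral.integral_of_le hp.le,
      MeasureTheory.integral_Ioc_eq_integral_Ioo, MeasureTheory.integral_Ioc_eq_integral_Ioo]
    refine MeasureTheory.setIntegral_congr_fun measurableSet_Ioo ?_
    rintro t ⟨ht0, ht1⟩
    have c2 : -1 < Real.cos t := by
      simpa using Real.cos_lt_cos_of_nonneg_of_le_pi ht0.le le_rfl ht1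
    have e : 1 + a * Real.cos t = (1 + s) / 2 *
        (1 + 2 * (a / (1 + s)) * Real.cos t + (a / (1 + s)) ^ 2) := by
      have : 1 + s ≠ 0 := by positivity
      have ha : a ^ 2 = 1 - s ^ 2 := by linarith
      field_simp
      rw [ha]
      ring
    have hpos' : 0 < 1 + a * Real.cos t := by nlinarith
    simp only
    rw [e] at hpos' ⊢
    rw [Real.log_mul (by positivity) (fun h => by rw [h] at hpos'; simp at hpos')]
  rw [key, intervalIntegral.integral_add (by simp) i, hI]
  simp
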